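/- arXiv:2202.08308 — 6 statements merged into one kernel-verified Lean document; each statement's English description precedes it below -/
import Mathlib

section
/- Let n be a positive integer and λ an infinite cardinal. Let α be a nonzero element of the semigroup 𝓘_λ^n with rank α = m ≤ n. Then the partially ordered set (↑_≼ α, ≼) (the set of elements above α in the natural partial order, with the induced order) is order isomorphic to the partially ordered set (𝓘_λ^{n−m}, ≼). -/
/-!
A partial bijection `β` above `α` is the disjoint union of `α` and a partial bijection from the
complement of the domain of `α` to the complement of its range, and that remainder has rank at most
`n - m` and can be chosen arbitrarily. Both complements arise by removing `m` points from the
infinite set `γ`, so they are equinumerous with `γ`, and relabelling them by `γ` turns the remainder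
into an element of `𝓘_γ^{n-m}`.
-/

open Set Topology Filter

/-- The symmetric inverse semigroup `𝓘_γ^n` of partial bijections of the set `γ`
of rank `≤ n`, represented by their (finite) graphs. -/
structure SymInvSg (γ : Type*) (n : ℕ) where
  graph : Set (γ × γ)
  inj' : ∀ ⦃x y x' y'⦄, (x, y) ∈ graph → (x', y') ∈ graph → (x = x' ↔ y = y')
  finite' : graph.Finite
  card_le' : graph.ncard ≤ n

namespace SymInvSg

variable {γ : Type*} {n : ℕ}

theorem ext' {a b : SymInvSg γ n} (h : a.graph = b.graph) : a = b := by
  cases a; cases b; simpa using h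

/-- Composition of partial bijections (in the left-to-right convention of
transformation semigroups, the choice of convention being immaterial). -/
instance : Mul (SymInvSg γ n) where
  mul a b :=
    { graph := {p | ∃ y, (p.1, y) ∈ a.graph ∧ (y, p.2) ∈ b.graph}
      inj' := by
        rintro x z x' z' ⟨y, hxy, hyz⟩ ⟨y', hxy', hyz'⟩
        constructor
        · rintro rfl
          have hy : y = y' := (a.inj' hxy hxy').mp rfl
          subst hy
          exact (b.inj' hyz hyz').mp rfl
        · rintro rfl
          have hy : y = y' := (b.inj' hyz hyz').mpr rfl
          subst hy
          exact (a.inj' hxy hxy').mpr rfl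
      finite' := by
        have : {p : γ × γ | ∃ y, (p.1, y) ∈ a.graph ∧ (y, p.2) ∈ b.graph} ⊆
            (fun q : (γ × γ) × (γ × γ) => (q.1.1, q.2.2)) '' (a.graph ×ˢ b.graph) := by
          rintro ⟨x, z⟩ ⟨y, hxy, hyz⟩
          exact ⟨((x, y), (y, z)), ⟨hxy, hyz⟩, rfl⟩
        exact Set.Finite.subset (Set.Finite.image _ (a.finite'.prod b.finite')) this
      card_le' := by
        have hinj : Set.InjOn Prod.fst
            {p : γ × γ | ∃ y, (p.1, y) ∈ a.graph ∧ (y, p.2) ∈ b.graph} := by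
          rintro ⟨x, z⟩ ⟨y, hxy, hyz⟩ ⟨x', z'⟩ ⟨y', hxy', hyz'⟩ h
          simp only at h
          subst h
          have hy : y = y' := (a.inj' hxy hxy').mp rfl
          subst hy
          have hz : z = z' := (b.inj' hyz hyz').mp rfl
          simp [hz]
        calc ({p : γ × γ | ∃ y, (p.1, y) ∈ a.graph ∧ (y, p.2) ∈ b.graph}).ncard
            ≤ (Prod.fst '' a.graph).ncard := by
              refine Set.ncard_le_ncard_of_injOn Prod.fst ?_ hinj (a.finite'.image _)
              rintro ⟨x, z⟩ hp
              exact ⟨(x, hp.choose), hp.choose_spec.1, rfl⟩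
          _ ≤ a.graph.ncard := Set.ncard_image_le a.finite'
          _ ≤ n := a.card_le' }

theorem mul_graph (a b : SymInvSg γ n) :
    (a * b).graph = {p : γ × γ | ∃ y, (p.1, y) ∈ a.graph ∧ (y, p.2) ∈ b.graph} := rfl

instance : Semigroup (SymInvSg γ n) where
  mul_assoc a b c := by
    refine ext' ?_
    simp only [mul_graph]
    ext ⟨x, w⟩
    constructor
    · rintro ⟨z, ⟨y, hxy, hyz⟩, hzw⟩
      exact ⟨y, hxy, z, hyz, hzw⟩
    · rintro ⟨y, hxy, z, hyz, hzw⟩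
      exact ⟨z, ⟨y, hxy, hyz⟩, hzw⟩

/-- The zero of `𝓘_γ^n` is the empty partial map. -/
instance : Zero (SymInvSg γ n) :=
  ⟨{ graph := ∅
     inj' := by simp
     finite' := Set.finite_empty
     card_le' := by simp }⟩

/-- The natural partial order on the inverse semigroup `𝓘_γ^n`:
`α ≼ β` iff the graph of `α` is contained in the graph of `β`. -/
instance : PartialOrder (SymInvSg γ n) where
  le a b := a.graph ⊆ b.graph
  le_refl a := subset_rfl
  le_trans a b c h₁ h₂ := Set.Subset.trans h₁ h₂
  le_antisymm a b h₁ h₂ := ext' (subset_antisymm h₁ h₂)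

/-- The rank of a partial bijection: the cardinality of its domain
(equivalently, of its graph). -/
noncomputable def rank (a : SymInvSg γ n) : ℕ := a.graph.ncard

/-- `𝓘_A^n`: the subsemigroup of partial bijections with domain and range inside `A`. -/
def restrictedTo (A : Set γ) : Set (SymInvSg γ n) :=
  {α | ∀ p ∈ α.graph, p.1 ∈ A ∧ p.2 ∈ A}

end SymInvSg

/-- A topology is shift-continuous when all left and right translations are continuous,
i.e. the space is a semitopological semigroup. -/
def ShiftContinuous (X : Type*) [TopologicalSpace X] [Mul X] : Prop :=
  ∀ a : X, Continuous (fun x => a * x) ∧ Continuous (fun x => x * a)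

/-- A space is feebly compact if every locally finite family of nonempty open sets is finite. -/
def FeeblyCompact (X : Type*) [TopologicalSpace X] : Prop :=
  ∀ F : Set (Set X), (∀ U ∈ F, IsOpen U ∧ U.Nonempty) →
    LocallyFinite (fun U : F => (U : Set X)) → F.Finite

/-- A space is sequentially pracompact if it has a dense subset `D` such that every
sequence in `D` has a convergent subsequence. -/
def SequentiallyPracompact (X : Type*) [TopologicalSpace X] : Prop :=
  ∃ D : Set X, Dense D ∧ ∀ u : ℕ → X, (∀ k, u k ∈ D) →
    ∃ (x : X) (φ : ℕ → ℕ), StrictMono φ ∧ Filter.Tendsto (u ∘ φ) Filter.atTop (nhds x)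

/-- A space is totally countably pracompact if it has a dense subset `D` such that every
sequence in `D` has a subsequence whose closure is compact. -/
def TotallyCountablyPracompact (X : Type*) [TopologicalSpace X] : Prop :=
  ∃ D : Set X, Dense D ∧ ∀ u : ℕ → X, (∀ k, u k ∈ D) →
    ∃ φ : ℕ → ℕ, StrictMono φ ∧ IsCompact (closure (Set.range (u ∘ φ)))

/-- A space is countably pracompact if it has a dense subset `A` such that every infinite
subset of `A` has an accumulation point in the space. -/
def CountablyPracompact (X : Type*) [TopologicalSpace X] : Prop :=
  ∃ A : Set X, Dense A ∧ ∀ B ⊆ A, B.Infinite → ∃ x : X, AccPt x (Filter.principal B)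

/-- A space is ω-bounded-pracompact if it has a dense subset `D` such that every countable
subset of `D` has compact closure. -/
def OmegaBoundedPracompact (X : Type*) [TopologicalSpace X] : Prop :=
  ∃ D : Set X, Dense D ∧ ∀ C ⊆ D, C.Countable → IsCompact (closure C)

/-- A space is feebly ω-bounded if for every sequence of nonempty open sets there is a
compact set meeting all of them. -/
def FeeblyOmegaBounded (X : Type*) [TopologicalSpace X] : Prop :=
  ∀ U : ℕ → Set X, (∀ k, IsOpen (U k) ∧ (U k).Nonempty) →
    ∃ K : Set X, IsCompact K ∧ ∀ k, (K ∩ U k).Nonempty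

universe u v

open Cardinal in
theorem exists_embedding_range_eq_compl {γ : Type u} {δ : Type v} {s : Set γ} (hs : s.Finite)
    (hδ : lift.{u} #δ + s.ncard = lift.{v} #γ) : ∃ g : δ ↪ γ, range g = sᶜ := by
  have hsum : lift.{v} #↥sᶜ + s.ncard = lift.{v} #γ := by
    rw [← mk_sum_compl s, lift_add, ← cast_ncard hs, lift_natCast, add_comm]
  have hcard : lift.{u} #δ = lift.{v} #↥sᶜ :=
    (add_nat_inj s.ncard).mp (hδ.trans hsum.symm)
  obtain ⟨e⟩ := lift_mk_eq'.mp hcard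
  exact ⟨e.toEmbedding.trans (Function.Embedding.subtype _),
    (e.surjective.range_comp _).trans Subtype.range_coe⟩

namespace SymInvSg

variable {γ : Type u} {δ : Type v} {n l : ℕ}

/-- The domain of a partial bijection. -/
def dom (α : SymInvSg γ n) : Set γ := Prod.fst '' α.graph

/-- The range of a partial bijection. -/
def ran (α : SymInvSg γ n) : Set γ := Prod.snd '' α.graph

theorem fst_mem_dom {α : SymInvSg γ n} {p : γ × γ} (hp : p ∈ α.graph) : p.1 ∈ α.dom :=
  mem_image_of_mem _ hp

theorem snd_mem_ran {α : SymInvSg γ n} {p : γ × γ} (hp : p ∈ α.graph) : p.2 ∈ α.ran :=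
  mem_image_of_mem _ hp

theorem injOn_fst (α : SymInvSg γ n) : InjOn Prod.fst α.graph :=
  fun _ hp _ hq h => Prod.ext h ((α.inj' hp hq).mp h)

theorem injOn_snd (α : SymInvSg γ n) : InjOn Prod.snd α.graph :=
  fun _ hp _ hq h => Prod.ext ((α.inj' hp hq).mpr h) h

theorem finite_dom (α : SymInvSg γ n) : α.dom.Finite := α.finite'.image _

theorem finite_ran (α : SymInvSg γ n) : α.ran.Finite := α.finite'.image _

theorem ncard_dom (α : SymInvSg γ n) : α.dom.ncard = α.rank :=
  α.injOn_fst.ncard_image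

theorem ncard_ran (α : SymInvSg γ n) : α.ran.ncard = α.rank :=
  α.injOn_snd.ncard_image

/-- A partial bijection of rank at most `l`, regarded as an element of `𝓘_γ^l`. -/
def ofRankLE (α : SymInvSg γ n) (h : α.rank ≤ l) : SymInvSg γ l :=
  { α with card_le' := h }

/-- The partial bijection of `δ` that becomes a restriction of `β` when its domain is relabelled
by `g` and its range, independently, by `k`. -/
def comap (g k : δ ↪ γ) (β : SymInvSg γ n) : SymInvSg δ n where
  graph := Prod.map g k ⁻¹' β.graph
  inj' _ _ _ _ h h' := g.injective.eq_iff.symm.trans ((β.inj' h h').trans k.injective.eq_iff)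
  finite' := β.finite'.preimage (g.injective.prodMap k.injective).injOn
  card_le' := (ncard_le_ncard_of_injOn (Prod.map g k) (fun _ => id)
    (g.injective.prodMap k.injective).injOn β.finite').trans β.card_le'

/-- The partial bijection of `γ` obtained from `ξ` by relabelling its domain by `g` and its
range, independently, by `k`. -/
def map (g k : δ ↪ γ) (ξ : SymInvSg δ n) : SymInvSg γ n where
  graph := Prod.map g k '' ξ.graph
  inj' := by
    rintro _ _ _ _ ⟨⟨a, b⟩, h, ⟨⟩⟩ ⟨⟨a', b'⟩, h', ⟨⟩⟩
    exact g.injective.eq_iff.trans ((ξ.inj' h h').trans k.injective.eq_iff.symm)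
  finite' := ξ.finite'.image _
  card_le' := (ncard_image_le ξ.finite').trans ξ.card_le'

/-- The union of two partial bijections with disjoint domains and disjoint ranges. -/
def disjUnion (α : SymInvSg γ n) (β : SymInvSg γ l) (hdom : Disjoint α.dom β.dom)
    (hran : Disjoint α.ran β.ran) : SymInvSg γ (n + l) where
  graph := α.graph ∪ β.graph
  inj' := by
    rintro x y x' y' (h | h) (h' | h')
    · exact α.inj' h h'
    · exact iff_of_false (hdom.ne_of_mem (fst_mem_dom h) (fst_mem_dom h'))
        (hran.ne_of_mem (snd_mem_ran h) (snd_mem_ran h'))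
    · exact iff_of_false (hdom.symm.ne_of_mem (fst_mem_dom h) (fst_mem_dom h'))
        (hran.symm.ne_of_mem (snd_mem_ran h) (snd_mem_ran h'))
    · exact β.inj' h h'
  finite' := α.finite'.union β.finite'
  card_le' := (ncard_union_le _ _).trans (add_le_add α.card_le' β.card_le')

theorem rank_disjUnion_le (α : SymInvSg γ n) (β : SymInvSg γ l) (hdom : Disjoint α.dom β.dom)
    (hran : Disjoint α.ran β.ran) : (α.disjUnion β hdom hran).rank ≤ α.rank + l :=
  (ncard_union_le _ _).trans (add_le_add_right β.card_le' _)

theorem dom_map_subset_range (g k : δ ↪ γ) (ξ : SymInvSg δ n) : (ξ.map g k).dom ⊆ range g := by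
  rintro _ ⟨_, ⟨p, -, rfl⟩, rfl⟩
  exact mem_range_self p.1

theorem ran_map_subset_range (g k : δ ↪ γ) (ξ : SymInvSg δ n) : (ξ.map g k).ran ⊆ range k := by
  rintro _ ⟨_, ⟨p, -, rfl⟩, rfl⟩
  exact mem_range_self p.2

theorem graph_sdiff_eq_inter {α β : SymInvSg γ n} (h : α ≤ β) :
    β.graph \ α.graph = β.graph ∩ α.domᶜ ×ˢ α.ranᶜ := by
  ext p
  refine and_congr_right fun hp => ⟨fun hpα => ⟨?_, ?_⟩, fun hpα hp' => hpα.1 (fst_mem_dom hp')⟩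
  · rintro ⟨q, hq, hqp⟩
    exact hpα (β.injOn_fst (h hq) hp hqp ▸ hq)
  · rintro ⟨q, hq, hqp⟩
    exact hpα (β.injOn_snd (h hq) hp hqp ▸ hq)

section Complement

variable {α β β' : SymInvSg γ n} {g k : δ ↪ γ}

theorem image_graph_comap (hg : range g = α.domᶜ) (hk : range k = α.ranᶜ) (hβ : α ≤ β) :
    Prod.map g k '' (β.comap g k).graph = β.graph \ α.graph := by
  rw [graph_sdiff_eq_inter hβ, ← hg, ← hk, ← range_prodMap]
  exact image_preimage_eq_inter_range

theorem rank_comap (hg : range g = α.domᶜ) (hk : range k = α.ranᶜ) (hβ : α ≤ β) :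
    (β.comap g k).rank = β.rank - α.rank := by
  rw [rank, ← ncard_image_of_injective _ (g.injective.prodMap k.injective),
    image_graph_comap hg hk hβ, ncard_sdiff hβ α.finite', rank, rank]

theorem comap_le_comap_iff (hg : range g = α.domᶜ) (hk : range k = α.ranᶜ) (hβ : α ≤ β)
    (hβ' : α ≤ β') : β.comap g k ≤ β'.comap g k ↔ β ≤ β' :=
  calc (β.comap g k).graph ⊆ Prod.map g k ⁻¹' β'.graph
      ↔ β.graph \ α.graph ⊆ β'.graph := by rw [← image_subset_iff, image_graph_comap hg hk hβ]
    _ ↔ β.graph ⊆ β'.graph := by rw [sdiff_subset_iff, union_eq_self_of_subset_left hβ']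

theorem disjoint_dom_map (hg : range g = α.domᶜ) (ξ : SymInvSg δ l) :
    Disjoint α.dom (ξ.map g k).dom :=
  disjoint_compl_right.mono_right (hg ▸ dom_map_subset_range g k ξ)

theorem disjoint_ran_map (hk : range k = α.ranᶜ) (ξ : SymInvSg δ l) :
    Disjoint α.ran (ξ.map g k).ran :=
  disjoint_compl_right.mono_right (hk ▸ ran_map_subset_range g k ξ)

theorem graph_comap_disjUnion_map (hg : range g = α.domᶜ) (ξ : SymInvSg δ l)
    (hdom : Disjoint α.dom (ξ.map g k).dom) (hran : Disjoint α.ran (ξ.map g k).ran) :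
    ((α.disjUnion (ξ.map g k) hdom hran).comap g k).graph = ξ.graph := by
  have hα : Prod.map g k ⁻¹' α.graph = ∅ :=
    eq_empty_of_forall_notMem fun p hp =>
      (hg ▸ mem_range_self p.1 : g p.1 ∈ α.domᶜ) (fst_mem_dom hp)
  change Prod.map g k ⁻¹' (α.graph ∪ Prod.map g k '' ξ.graph) = ξ.graph
  rw [preimage_union, hα, empty_union, preimage_image_eq _ (g.injective.prodMap k.injective)]

/-- Relabelling the complements of the domain and of the range of `α` by `δ` sends each `β` above
`α` to the part of `β` outside `α`. -/
noncomputable def upperSetEmbedding (hg : range g = α.domᶜ) (hk : range k = α.ranᶜ) :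
    {β : SymInvSg γ n // α ≤ β} ↪o SymInvSg δ (n - α.rank) :=
  OrderEmbedding.ofMapLEIff
    (fun β => (β.1.comap g k).ofRankLE <|
      (rank_comap hg hk β.2).trans_le (Nat.sub_le_sub_right β.1.card_le' _))
    fun β β' => comap_le_comap_iff hg hk β.2 β'.2

theorem upperSetEmbedding_surjective (hg : range g = α.domᶜ) (hk : range k = α.ranᶜ) :
    Function.Surjective (upperSetEmbedding hg hk) := by
  intro ξ
  have hdom := disjoint_dom_map (k := k) hg ξ
  have hran := disjoint_ran_map (g := g) hk ξ
  have hrank : (α.disjUnion (ξ.map g k) hdom hran).rank ≤ n :=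
    (rank_disjUnion_le _ _ _ _).trans (Nat.add_sub_of_le α.card_le').le
  exact ⟨⟨(α.disjUnion (ξ.map g k) hdom hran).ofRankLE hrank, subset_union_left⟩,
    ext' (graph_comap_disjUnion_map hg ξ hdom hran)⟩

end Complement

end SymInvSg

open Cardinal in
theorem upperSet_orderIso_symInvSg_general {γ : Type u} {δ : Type v} {n : ℕ} (α : SymInvSg γ n)
    (hδ : lift.{u} #δ + α.rank = lift.{v} #γ) :
    Nonempty ({β : SymInvSg γ n // α ≤ β} ≃o SymInvSg δ (n - α.rank)) := by
  obtain ⟨g, hg⟩ := exists_embedding_range_eq_compl α.finite_dom (by rwa [α.ncard_dom])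
  obtain ⟨k, hk⟩ := exists_embedding_range_eq_compl α.finite_ran (by rwa [α.ncard_ran])
  exact ⟨RelIso.ofSurjective _ (SymInvSg.upperSetEmbedding_surjective hg hk)⟩

/-- For a nonzero `α ∈ 𝓘_λ^n` of rank `m ≤ n` over an infinite cardinal `λ`,
the upper set `↑_≼ α` with the induced natural partial order is order isomorphic to
`(𝓘_λ^{n-m}, ≼)`. -/
theorem upperSet_orderIso_symInvSg {γ : Type*} [Infinite γ] {n m : ℕ} (hn : 0 < n)
    (α : SymInvSg γ n) (hα : α ≠ 0) (hrank : SymInvSg.rank α = m) (hmn : m ≤ n) :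
    Nonempty ({β : SymInvSg γ n // α ≤ β} ≃o SymInvSg γ (n - m)) := by
  subst hrank
  exact upperSet_orderIso_symInvSg_general α (by simp [Cardinal.add_nat_eq])
end

section
/- Let λ be an infinite cardinal and let τ be a feebly compact topology on the semigroup 𝓘_λ^1 such that the set ↑_≼ α is both closed and open in (𝓘_λ^1, τ) for every α ∈ 𝓘_λ^1. Then the topology τ is compact. -/
/-!
In a feebly compact space a closed set `C` of isolated points is finite: its singletons are open,
the neighbourhood `Cᶜ` of a point outside `C` meets none of them, and the neighbourhood `{x}` of a
point `x` of `C` meets just one. So once finitely many members of an open cover contain a compact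
set `K` outside which all points are isolated, only finitely many points are left to cover.

In `𝓘_λ^1` one takes `K = {𝟎}`: a partial bijection of rank `1` is maximal, so its upper set is a
singleton, and hence it is an isolated point.
-/

open Set Topology Filter

namespace FeeblyCompact

variable {X : Type*} [TopologicalSpace X]

theorem finite_of_isClosed_of_isOpen_singleton (hX : FeeblyCompact X) {C : Set X}
    (hC : IsClosed C) (hiso : ∀ x ∈ C, IsOpen {x}) : C.Finite := by
  have hlf : LocallyFinite fun x : C => ({(x : X)} : Set X) := by
    intro y
    by_cases hy : y ∈ C
    · refine ⟨{y}, (hiso y hy).mem_nhds rfl, (finite_singleton (⟨y, hy⟩ : C)).subset ?_⟩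
      exact fun x hx => Subtype.ext (mem_singleton_iff.mp (singleton_inter_nonempty.mp hx))
    · refine ⟨Cᶜ, hC.isOpen_compl.mem_nhds hy, finite_empty.subset ?_⟩
      exact fun x hx => singleton_inter_nonempty.mp hx x.2
  have hsingletons : (singleton '' C : Set (Set X)).Finite := by
    rw [image_eq_range]
    exact hX _ (forall_mem_range.mpr fun x => ⟨hiso x x.2, singleton_nonempty _⟩) hlf.on_range
  exact hsingletons.of_finite_image singleton_injective.injOn

theorem compactSpace_of_isOpen_singleton_of_notMem (hX : FeeblyCompact X) {K : Set X}
    (hK : IsCompact K) (hiso : ∀ x ∉ K, IsOpen {x}) : CompactSpace X := by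
  refine ⟨isCompact_of_finite_subcover fun U hU hcover => ?_⟩
  obtain ⟨s, hs⟩ := hK.elim_finite_subcover U hU ((subset_univ K).trans hcover)
  have hrest : (⋃ i ∈ s, U i)ᶜ.Finite :=
    hX.finite_of_isClosed_of_isOpen_singleton
      (isOpen_biUnion fun i _ => hU i).isClosed_compl fun x hx => hiso x (notMem_subset hs hx)
  obtain ⟨t, ht⟩ := hrest.isCompact.elim_finite_subcover U hU ((subset_univ _).trans hcover)
  classical
  refine ⟨s ∪ t, ?_⟩
  rw [Finset.set_biUnion_union]
  exact (compl_subset_iff_union.mp ht).ge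

end FeeblyCompact

namespace SymInvSg

variable {γ : Type*} {n : ℕ}

theorem rank_eq_zero {α : SymInvSg γ n} : α.rank = 0 ↔ α = 0 :=
  (ncard_eq_zero α.finite').trans ⟨fun h => ext' h, fun h => h ▸ rfl⟩

theorem isMax_of_rank_eq {α : SymInvSg γ n} (hα : α.rank = n) : IsMax α := fun β hαβ =>
  (eq_of_subset_of_ncard_le hαβ (β.card_le'.trans hα.ge) β.finite').ge

theorem isMax_of_ne_zero {α : SymInvSg γ 1} (hα : α ≠ 0) : IsMax α :=
  isMax_of_rank_eq (α.card_le'.antisymm (Nat.one_le_iff_ne_zero.mpr (mt rank_eq_zero.mp hα)))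

end SymInvSg

theorem compact_of_feeblyCompact_upperSets_clopen_general {γ : Type*}
    [TopologicalSpace (SymInvSg γ 1)]
    (hfc : FeeblyCompact (SymInvSg γ 1))
    (hopen : ∀ α : SymInvSg γ 1, IsOpen (Set.Ici α)) :
    CompactSpace (SymInvSg γ 1) := by
  refine hfc.compactSpace_of_isOpen_singleton_of_notMem (K := {0}) isCompact_singleton
    fun α hα => ?_
  rw [← (SymInvSg.isMax_of_ne_zero hα).Ici_eq]
  exact hopen α

/-- If `τ` is a feebly compact topology on `𝓘_λ^1` (`λ` an infinite cardinal)
such that every upper set `↑_≼ α` is closed-and-open, then `τ` is compact. -/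
theorem compact_of_feeblyCompact_upperSets_clopen {γ : Type*} [Infinite γ]
    [TopologicalSpace (SymInvSg γ 1)]
    (hfc : FeeblyCompact (SymInvSg γ 1))
    (hclopen : ∀ α : SymInvSg γ 1, IsClosed (Set.Ici α) ∧ IsOpen (Set.Ici α)) :
    CompactSpace (SymInvSg γ 1) :=
  compact_of_feeblyCompact_upperSets_clopen_general hfc fun α => (hclopen α).2
end

section
/- Let n be an arbitrary positive integer and λ an arbitrary infinite cardinal. Then every feebly compact shift-continuous T₁-topology τ on the semigroup 𝓘_λ^n is sequentially pracompact. -/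
/-!
The sets `↑a` of all extensions of a partial bijection `a` are open: `b ↦ a⁻¹ba⁻¹` is continuous
with finite range, hence locally constant, and takes the value `a⁻¹` exactly on `↑a`. A partial
bijection `b` lies in `↑a` for at most `2 ^ n` choices of `a`. All that matters from here on is such
an assignment `x ↦ O x` of open neighbourhoods for which each point lies in at most `N` of the sets
`O x`.

Choose `a` in a nonempty open set `U` so that it lies in as many of the `O x` as possible. Nearby
points of `U` lie in the same `O x` as `a`, so there are only finitely many of them and, by the `T₀`
axiom, one of them is isolated. Isolated points are thus dense, and by feeble compactness each
sequence of them has a cluster point. Suppose that none of its subsequences converges. Let `x` be a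
cluster point. Pass to a subsequence lying in `O x`, and then, as this one does not converge to `x`,
to one of which `x` is not a cluster point. Repeating this `N + 1` times produces `N + 1` different
points `x`, and a term of the sequence that lies in `O x` for all of them.
-/

open Set Topology Filter

namespace FeeblyCompact

variable {X : Type*} [TopologicalSpace X]

theorem finite_of_locallyFinite (hX : FeeblyCompact X) {ι : Type*} {U : ι → Set X}
    (hU : ∀ i, IsOpen (U i) ∧ (U i).Nonempty) (hlf : LocallyFinite U) : Finite ι := by
  have hrange : (range U).Finite := hX _ (forall_mem_range.2 hU) hlf.on_range
  have hfiber : ∀ V ∈ range U, (univ ∩ U ⁻¹' {V}).Finite := by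
    rintro _ ⟨i, rfl⟩
    obtain ⟨x, hx⟩ := (hU i).2
    exact (hlf.point_finite x).subset fun j ⟨_, hj⟩ => (mem_singleton_iff.1 hj).ge hx
  exact finite_univ_iff.1 (Finite.of_finite_fibers U (by rwa [image_univ]) (by rwa [image_univ]))

theorem exists_mapClusterPt (hX : FeeblyCompact X) {ι : Type*} [Infinite ι] {u : ι → X}
    (hu : ∀ i, IsOpen {u i}) : ∃ x, MapClusterPt x cofinite u := by
  by_contra! hno
  refine not_finite_iff_infinite.2 ‹Infinite ι› <|
    hX.finite_of_locallyFinite (fun i => ⟨hu i, singleton_nonempty _⟩) fun x => ?_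
  simpa only [mapClusterPt_iff_frequently, frequently_cofinite_iff_infinite, not_forall,
    not_infinite, exists_prop, singleton_inter_nonempty] using hno x

end FeeblyCompact

section Subsequences

variable {X : Type*} [TopologicalSpace X]

theorem exists_subseq_forall_mem_and_not_mapClusterPt {v : ℕ → X} {x : X} {O : Set X}
    (hO : O ∈ 𝓝 x) (hx : MapClusterPt x atTop v)
    (hdiv : ∀ φ : ℕ → ℕ, StrictMono φ → ¬ Tendsto (v ∘ φ) atTop (𝓝 x)) :
    ∃ φ : ℕ → ℕ, StrictMono φ ∧ (∀ k, v (φ k) ∈ O) ∧ ¬ MapClusterPt x atTop (v ∘ φ) := by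
  obtain ⟨φ, hφ, hφO⟩ := extraction_of_frequently_atTop (hx.frequently hO)
  obtain ⟨V, hV, hfreq⟩ := not_tendsto_iff_exists_frequently_notMem.1 (hdiv φ hφ)
  obtain ⟨ψ, hψ, hψV⟩ := extraction_of_frequently_atTop hfreq
  refine ⟨φ ∘ ψ, hφ.comp hψ, fun k => hφO (ψ k), fun hcl => ?_⟩
  obtain ⟨k, hk⟩ := (hcl.frequently hV).exists
  exact hψV k hk

theorem exists_finset_card_eq_of_forall_not_tendsto {u : ℕ → X} {O : X → Set X}
    (hO : ∀ x, O x ∈ 𝓝 x)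
    (hcluster : ∀ φ : ℕ → ℕ, StrictMono φ → ∃ x, MapClusterPt x atTop (u ∘ φ))
    (hdiv : ∀ (x : X) (φ : ℕ → ℕ), StrictMono φ → ¬ Tendsto (u ∘ φ) atTop (𝓝 x)) (m : ℕ) :
    ∃ F : Finset X, F.card = m ∧ ∃ φ : ℕ → ℕ, StrictMono φ ∧
      ∀ x ∈ F, (∀ k, u (φ k) ∈ O x) ∧ ¬ MapClusterPt x atTop (u ∘ φ) := by
  classical
  induction m with
  | zero => exact ⟨∅, rfl, id, strictMono_id, by simp⟩
  | succ m ih =>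
    obtain ⟨F, hF, φ, hφ, hFφ⟩ := ih
    obtain ⟨x, hx⟩ := hcluster φ hφ
    obtain ⟨ψ, hψ, hψO, hψx⟩ := exists_subseq_forall_mem_and_not_mapClusterPt (hO x) hx
      fun ψ hψ => hdiv x (φ ∘ ψ) (hφ.comp hψ)
    have hxF : x ∉ F := fun hxF => (hFφ x hxF).2 hx
    have hFψ : ∀ y ∈ F, (∀ k, u (φ (ψ k)) ∈ O y) ∧ ¬ MapClusterPt y atTop (u ∘ φ ∘ ψ) :=
      fun y hy => ⟨fun k => (hFφ y hy).1 (ψ k),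
        fun hcl => (hFφ y hy).2 (hcl.of_comp hψ.tendsto_atTop)⟩
    exact ⟨insert x F, by rw [Finset.card_insert_of_notMem hxF, hF], φ ∘ ψ, hφ.comp hψ,
      (Finset.forall_mem_insert _ _ _).2 ⟨⟨hψO, hψx⟩, hFψ⟩⟩

end Subsequences

/-- An open neighbourhood assignment `x ↦ O x` of multiplicity at most `N`: every point lies in at
most `N` of the sets `O x`, counted by their indices `x`. It abstracts the assignment `a ↦ ↑a` on
`𝓘_γ^n`. -/
structure BoundedNhdAssignment {X : Type*} [TopologicalSpace X] (O : X → Set X) (N : ℕ) : Prop where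
  isOpen : ∀ x, IsOpen (O x)
  mem_self : ∀ x, x ∈ O x
  encard_le : ∀ y, {x | y ∈ O x}.encard ≤ N

namespace BoundedNhdAssignment

variable {X : Type*} [TopologicalSpace X] {O : X → Set X} {N : ℕ}

theorem mem_nhds (hO : BoundedNhdAssignment O N) (x : X) : O x ∈ 𝓝 x :=
  (hO.isOpen x).mem_nhds (hO.mem_self x)

theorem finite_setOf_mem (hO : BoundedNhdAssignment O N) (y : X) : {x | y ∈ O x}.Finite :=
  finite_of_encard_le_coe (hO.encard_le y)

theorem ncard_setOf_mem_le (hO : BoundedNhdAssignment O N) (y : X) : {x | y ∈ O x}.ncard ≤ N :=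
  (encard_le_coe_iff_finite_ncard_le.1 (hO.encard_le y)).2

theorem exists_finite_isOpen_subset (hO : BoundedNhdAssignment O N) {U : Set X} (hU : IsOpen U)
    (hne : U.Nonempty) : ∃ V ⊆ U, V.Finite ∧ IsOpen V ∧ V.Nonempty := by
  obtain ⟨a, haU, hmax⟩ := Finite.exists_maximalFor' (fun a => {x | a ∈ O x}.ncard) U
    ((finite_Iic N).subset (image_subset_iff.2 fun a _ => hO.ncard_setOf_mem_le a)) hne
  refine ⟨U ∩ ⋂ x ∈ {x | a ∈ O x}, O x, inter_subset_left, (hO.finite_setOf_mem a).subset ?_,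
    hU.inter ((hO.finite_setOf_mem a).isOpen_biInter fun x _ => hO.isOpen x), a, haU,
    mem_iInter₂.2 fun _ hx => hx⟩
  rintro b ⟨hbU, hb⟩
  have hsub : {x | a ∈ O x} ⊆ {x | b ∈ O x} := fun x hx => mem_iInter₂.1 hb x hx
  have hfin := hO.finite_setOf_mem b
  have heq : {x | a ∈ O x} = {x | b ∈ O x} :=
    eq_of_subset_of_ncard_le hsub (hmax hbU (ncard_le_ncard hsub hfin)) hfin
  exact heq ▸ hO.mem_self b

theorem dense_setOf_isOpen_singleton [T0Space X] (hO : BoundedNhdAssignment O N) :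
    Dense {x : X | IsOpen {x}} := by
  refine dense_iff_inter_open.2 fun U hU hne => ?_
  obtain ⟨V, hVU, hfin, hV, hVne⟩ := hO.exists_finite_isOpen_subset hU hne
  obtain ⟨x, hxV, hx⟩ := exists_isOpen_singleton_of_isOpen_finite hfin hVne hV
  exact ⟨x, hVU hxV, hx⟩

theorem exists_tendsto_subseq (hO : BoundedNhdAssignment O N) {u : ℕ → X}
    (hcluster : ∀ φ : ℕ → ℕ, StrictMono φ → ∃ x, MapClusterPt x atTop (u ∘ φ)) :
    ∃ (x : X) (φ : ℕ → ℕ), StrictMono φ ∧ Tendsto (u ∘ φ) atTop (𝓝 x) := by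
  by_contra! hdiv
  obtain ⟨F, hcard, φ, -, hF⟩ :=
    exists_finset_card_eq_of_forall_not_tendsto hO.mem_nhds hcluster hdiv (N + 1)
  have hle : F.card ≤ N := calc
    F.card = (F : Set X).ncard := (ncard_coe_finset F).symm
    _ ≤ {x | u (φ 0) ∈ O x}.ncard :=
      ncard_le_ncard (fun x hx => (hF x hx).1 0) (hO.finite_setOf_mem _)
    _ ≤ N := hO.ncard_setOf_mem_le _
  omega

end BoundedNhdAssignment

theorem sequentiallyPracompact_of_feeblyCompact_general {X : Type*} [TopologicalSpace X] [T0Space X]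
    {O : X → Set X} {N : ℕ} (hO : BoundedNhdAssignment O N) (hX : FeeblyCompact X) :
    SequentiallyPracompact X := by
  refine ⟨{x | IsOpen {x}}, hO.dense_setOf_isOpen_singleton, fun u hu => ?_⟩
  refine hO.exists_tendsto_subseq fun φ _ => ?_
  rw [← Nat.cofinite_eq_atTop]
  exact hX.exists_mapClusterPt fun k => hu (φ k)

theorem isLocallyConstant_of_finite_range {X Y : Type*} [TopologicalSpace X] [TopologicalSpace Y]
    [T1Space Y] {f : X → Y} (hf : Continuous f) (hfin : (range f).Finite) :
    IsLocallyConstant f := by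
  have := hfin.to_subtype
  have hconst : IsLocallyConstant (rangeFactorization f) :=
    (IsLocallyConstant.iff_continuous _).2 hf.rangeFactorization
  exact hconst.comp Subtype.val

namespace SymInvSg

variable {γ : Type*} {n : ℕ}

theorem graph_injective : Function.Injective (graph : SymInvSg γ n → Set (γ × γ)) :=
  fun _ _ => ext'

/-- The inverse of a partial bijection in the inverse semigroup `𝓘_γ^n`. -/
instance : Inv (SymInvSg γ n) where
  inv a :=
    { graph := Prod.swap ⁻¹' a.graph
      inj' := fun _ _ _ _ h h' => (a.inj' h h').symm
      finite' := a.finite'.preimage Prod.swap_injective.injOn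
      card_le' := (ncard_le_ncard_of_injOn Prod.swap (fun _ hp => hp)
        Prod.swap_injective.injOn a.finite').trans a.card_le' }

theorem mem_graph_inv_mul_mul_inv {a b : SymInvSg γ n} {x y : γ} :
    (y, x) ∈ (a⁻¹ * b * a⁻¹).graph ↔
      ∃ z w, (w, y) ∈ a.graph ∧ (w, z) ∈ b.graph ∧ (x, z) ∈ a.graph :=
  ⟨fun ⟨z, ⟨w, hwy, hwz⟩, hxz⟩ => ⟨z, w, hwy, hwz, hxz⟩,
    fun ⟨z, w, hwy, hwz, hxz⟩ => ⟨z, ⟨w, hwy, hwz⟩, hxz⟩⟩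

theorem inv_mul_mul_inv_eq_inv_iff {a b : SymInvSg γ n} : a⁻¹ * b * a⁻¹ = a⁻¹ ↔ a ≤ b := by
  constructor
  · rintro h ⟨x, y⟩ hxy
    have hyx : (y, x) ∈ (a⁻¹ * b * a⁻¹).graph := by rw [h]; exact hxy
    obtain ⟨z, w, hwy, hwz, hxz⟩ := mem_graph_inv_mul_mul_inv.1 hyx
    obtain rfl : w = x := (a.inj' hwy hxy).2 rfl
    obtain rfl : z = y := (a.inj' hxz hxy).1 rfl
    exact hwz
  · intro hab
    refine ext' (Set.ext fun ⟨y, x⟩ => mem_graph_inv_mul_mul_inv.trans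
      ⟨?_, fun hxy => ⟨y, x, hxy, hab hxy, hxy⟩⟩)
    rintro ⟨z, w, hwy, hwz, hxz⟩
    obtain rfl : y = z := (b.inj' (hab hwy) hwz).1 rfl
    exact hxz

theorem finite_range_inv_mul_mul_inv (a : SymInvSg γ n) :
    (range fun b => a⁻¹ * b * a⁻¹).Finite := by
  have hfin : {S | S ⊆ (Prod.snd '' a.graph) ×ˢ (Prod.fst '' a.graph)}.Finite :=
    ((a.finite'.image _).prod (a.finite'.image _)).finite_subsets
  refine (hfin.preimage graph_injective.injOn).subset ?_
  rintro _ ⟨b, rfl⟩ ⟨y, x⟩ hyx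
  obtain ⟨z, w, hwy, -, hxz⟩ := mem_graph_inv_mul_mul_inv.1 hyx
  exact ⟨⟨(w, y), hwy, rfl⟩, ⟨(x, z), hxz, rfl⟩⟩

theorem isOpen_Ici [TopologicalSpace (SymInvSg γ n)] [T1Space (SymInvSg γ n)]
    (hsc : ShiftContinuous (SymInvSg γ n)) (a : SymInvSg γ n) : IsOpen (Ici a) := by
  have hcont : Continuous fun b => a⁻¹ * b * a⁻¹ := (hsc a⁻¹).2.comp (hsc a⁻¹).1
  have hconst := isLocallyConstant_of_finite_range hcont (finite_range_inv_mul_mul_inv a)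
  simpa only [inv_mul_mul_inv_eq_inv_iff, ← mem_Ici, ofPred_mem_eq] using hconst.isOpen_fiber a⁻¹

theorem encard_Iic_le (a : SymInvSg γ n) : (Iic a).encard ≤ (2 ^ n : ℕ) := by
  have hpow : (𝒫 a.graph).Finite := a.finite'.finite_subsets
  have hmaps : MapsTo graph (Iic a) (𝒫 a.graph) := fun _ hb => hb
  refine (encard_le_encard_of_injOn hmaps graph_injective.injOn).trans <|
    encard_le_coe_iff_finite_ncard_le.2 ⟨hpow, ?_⟩
  rw [ncard_powerset _ a.finite']
  exact Nat.pow_le_pow_right two_pos a.card_le'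

theorem boundedNhdAssignment_Ici [TopologicalSpace (SymInvSg γ n)] [T1Space (SymInvSg γ n)]
    (hsc : ShiftContinuous (SymInvSg γ n)) :
    BoundedNhdAssignment (Ici : SymInvSg γ n → Set (SymInvSg γ n)) (2 ^ n) where
  isOpen := isOpen_Ici hsc
  mem_self _ := self_mem_Ici
  encard_le := encard_Iic_le

end SymInvSg

/-- Every feebly compact shift-continuous `T₁`-topology on `𝓘_λ^n`
(`n` a positive integer, `λ` an infinite cardinal) is sequentially pracompact. -/
theorem sequentiallyPracompact_of_feeblyCompact {γ : Type*} [Infinite γ] {n : ℕ} (hn : 0 < n)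
    [TopologicalSpace (SymInvSg γ n)] [T1Space (SymInvSg γ n)]
    (hsc : ShiftContinuous (SymInvSg γ n))
    (hfc : FeeblyCompact (SymInvSg γ n)) :
    SequentiallyPracompact (SymInvSg γ n) :=
  sequentiallyPracompact_of_feeblyCompact_general (SymInvSg.boundedNhdAssignment_Ici hsc) hfc
end

section
/- There exists a Hausdorff shift-continuous topology τ on the countable semigroup 𝓘_ω^2 such that (𝓘_ω^2, τ) is a countably pracompact (hence feebly compact) semitopological semigroup which is not compact and not ω-bounded-pracompact. -/
/-!
Identifying partial bijections with their graphs makes `𝓘_γ^n` a closed subspace of the Cantor cube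
`2^(γ × γ)`, hence a compact Hausdorff semitopological semigroup. Now refine this topology just
enough to make the set `Δ` of rank-one idempotents closed.

* The product `a * x` can lie in `Δ` only as one of the finitely many idempotents `(m, m)` with `m`
  in the domain of `a`. So the preimage of `Δ` under a translation is already closed in the compact
  topology, and translations stay continuous.
* For subsets of the complement of `Δ`, closures and accumulation points do not change. This
  complement is dense, so it witnesses countable pracompactness.
* If `K` is compact in the refined topology, then so is `K ∩ Δ`, which is therefore closed in the
  original topology. For a countably infinite `A ⊆ γ`, the idempotents of rank `n` with domain in
  `A` are isolated, so they lie in every dense set. Their closure contains `(a, a)` for each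
  `a ∈ A`, and these converge to `0 ∉ Δ` in the original topology, so it is not compact in the
  refined one.
-/

open Set Topology Filter

section Pracompact

variable {X : Type*} [TopologicalSpace X]

theorem OmegaBoundedPracompact.of_compactSpace [CompactSpace X] : OmegaBoundedPracompact X :=
  ⟨univ, dense_univ, fun _ _ _ => isClosed_closure.isCompact⟩

theorem CountablyPracompact.feeblyCompact [T1Space X] (h : CountablyPracompact X) :
    FeeblyCompact X := by
  obtain ⟨A, hA, hacc⟩ := h
  intro F hF hlf
  by_contra hinf
  have : Infinite F := infinite_coe_iff.2 hinf
  have hpt (U : F) : ((U : Set X) ∩ A).Nonempty :=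
    hA.inter_open_nonempty U (hF U U.2).1 (hF U U.2).2
  choose f hfU hfA using hpt
  have hfiber (y : X) : (f ⁻¹' {y}).Finite := by
    refine (hlf.point_finite y).subset fun U hU => ?_
    obtain rfl : f U = y := hU
    exact hfU U
  have hrange : (range f).Infinite := fun hfin => infinite_univ <| by
    simpa using hfin.preimage' fun y _ => hfiber y
  obtain ⟨x, hx⟩ := hacc (range f) (range_subset_iff.2 hfA) hrange
  obtain ⟨V, hV, hVfin⟩ := hlf x
  refine Infinite.of_accPt (hx.nhds_inter hV) ((hVfin.image f).subset ?_)
  rintro _ ⟨hfV, U, rfl⟩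
  exact ⟨U, ⟨f U, hfU U, hfV⟩, rfl⟩

end Pracompact

section ForceClosed

open TopologicalSpace

variable {X : Type*} [TopologicalSpace X]

/-- The coarsest refinement of the given topology in which `s` is closed. -/
abbrev forceClosed (s : Set X) : TopologicalSpace X :=
  ‹TopologicalSpace X› ⊓ generateFrom {sᶜ}

theorem forceClosed_le (s : Set X) : forceClosed s ≤ ‹TopologicalSpace X› := inf_le_left

theorem isClosed_forceClosed (s : Set X) : IsClosed[forceClosed s] s :=
  @IsClosed.mk X (forceClosed s) s <|
    (inf_le_right : forceClosed s ≤ _) _ <| isOpen_generateFrom_of_mem rfl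

theorem t2Space_forceClosed [T2Space X] (s : Set X) : @T2Space X (forceClosed s) :=
  t2Space_antitone (forceClosed_le s) inferInstance

theorem continuous_forceClosed_iff {Y : Type*} {t : TopologicalSpace Y} {s : Set X} {f : Y → X} :
    Continuous[t, forceClosed s] f ↔ Continuous f ∧ IsClosed (f ⁻¹' s) := by
  rw [continuous_inf_rng, continuous_generateFrom_iff]
  simp [← isOpen_compl_iff]

theorem nhdsWithin_forceClosed {s t : Set X} (hst : t ⊆ sᶜ) (x : X) :
    @nhdsWithin X (forceClosed s) x t = 𝓝[t] x := by
  refine le_antisymm (inf_le_inf_right _ (nhds_mono (forceClosed_le s))) ?_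
  simp only [nhdsWithin, nhds_inf, nhds_generateFrom]
  refine le_inf (le_inf inf_le_left (inf_le_right.trans (le_iInf₂ ?_))) inf_le_right
  rintro _ ⟨-, rfl⟩
  exact principal_mono.2 hst

theorem closure_forceClosed {s t : Set X} (hst : t ⊆ sᶜ) :
    closure[forceClosed s] t = closure t := by
  ext x
  rw [@mem_closure_iff_nhdsWithin_neBot X (forceClosed s), mem_closure_iff_nhdsWithin_neBot,
    nhdsWithin_forceClosed hst]

theorem accPt_forceClosed {s t : Set X} (hst : t ⊆ sᶜ) (x : X) :
    @AccPt X (forceClosed s) x (𝓟 t) ↔ AccPt x (𝓟 t) := by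
  rw [@accPt_principal_iff_nhdsWithin X (forceClosed s), accPt_principal_iff_nhdsWithin,
    nhdsWithin_forceClosed (sdiff_subset.trans hst)]

theorem countablyPracompact_forceClosed [CompactSpace X] {s : Set X} (hs : Dense sᶜ) :
    @CountablyPracompact X (forceClosed s) := by
  refine ⟨sᶜ, fun x => ?_, fun B hB hinf => ?_⟩
  · rw [closure_forceClosed subset_rfl]
    exact hs x
  · obtain ⟨x, hx⟩ := hinf.exists_accPt_principal
    exact ⟨x, (accPt_forceClosed hB x).2 hx⟩

theorem isClosed_inter_of_isCompact_forceClosed [T2Space X] {s K : Set X}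
    (hK : @IsCompact X (forceClosed s) K) : IsClosed (K ∩ s) := by
  have hKs : @IsCompact X (forceClosed s) (K ∩ s) :=
    @IsCompact.inter_right X (forceClosed s) _ _ hK (isClosed_forceClosed s)
  have hid := continuous_id_of_le (forceClosed_le s)
  simpa using (@IsCompact.image X X (forceClosed s) _ _ _ hKs hid).isClosed

theorem ShiftContinuous.forceClosed [Mul X] (hX : ShiftContinuous X) {s : Set X}
    (hs : ∀ a : X, IsClosed ((a * ·) ⁻¹' s) ∧ IsClosed ((· * a) ⁻¹' s)) :
    @ShiftContinuous X (forceClosed s) _ := by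
  have hle := forceClosed_le s
  exact fun a =>
    ⟨continuous_le_dom hle (continuous_forceClosed_iff.2 ⟨(hX a).1, (hs a).1⟩),
      continuous_le_dom hle (continuous_forceClosed_iff.2 ⟨(hX a).2, (hs a).2⟩)⟩

end ForceClosed

namespace SymInvSg

variable {γ : Type*} {n : ℕ}

theorem eq_of_le_of_rank_eq {x y : SymInvSg γ n} (hxy : x ≤ y) (hx : x.rank = n) : x = y :=
  ext' (eq_of_subset_of_ncard_le hxy (y.card_le'.trans hx.ge) y.finite')

theorem restrictedTo_eq_preimage (A : Set γ) :
    (restrictedTo A : Set (SymInvSg γ n)) = graph ⁻¹' {t | t.Finite ∧ t ⊆ A ×ˢ A} :=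
  Set.ext fun x => ⟨fun hx => ⟨x.finite', hx⟩, And.right⟩

theorem finite_restrictedTo {A : Set γ} (hA : A.Finite) :
    (restrictedTo A : Set (SymInvSg γ n)).Finite := by
  rw [restrictedTo_eq_preimage]
  exact ((hA.prod hA).finite_subsets.subset fun _ => And.right).preimage graph_injective.injOn

theorem countable_restrictedTo {A : Set γ} (hA : A.Countable) :
    (restrictedTo A : Set (SymInvSg γ n)).Countable := by
  rw [restrictedTo_eq_preimage]
  exact (countable_ofPred_finite_subset (hA.prod hA)).preimage_of_injOn graph_injective.injOn

theorem exists_graph_eq_of_forall_finite_subset {S : Set (γ × γ)}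
    (hS : ∀ T ⊆ S, T.Finite → ∃ y : SymInvSg γ n, T ⊆ y.graph) :
    ∃ x : SymInvSg γ n, x.graph = S := by
  have hcard : S.encard ≤ n := by
    by_contra! hlt
    obtain ⟨T, hTS, hT⟩ := exists_subset_encard_eq (Order.add_one_le_of_lt hlt)
    obtain ⟨y, hy⟩ := hS T hTS (finite_of_encard_eq_coe hT)
    have hle : T.encard ≤ n :=
      (encard_le_encard hy).trans (encard_le_coe_iff_finite_ncard_le.2 ⟨y.finite', y.card_le'⟩)
    rw [hT] at hle
    exact absurd hle (by exact_mod_cast Nat.not_succ_le_self n)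
  obtain ⟨hfin, hncard⟩ := encard_le_coe_iff_finite_ncard_le.1 hcard
  refine ⟨⟨S, fun x y x' y' h h' => ?_, hfin, hncard⟩, rfl⟩
  obtain ⟨z, hz⟩ := hS {(x, y), (x', y')} (pair_subset h h') (toFinite _)
  exact z.inj' (hz (by simp)) (hz (by simp))

theorem exists_graph_eq_of_subset_diagonal {S : Set (γ × γ)} (hS : S ⊆ diagonal γ)
    (hcard : S.encard ≤ n) : ∃ x : SymInvSg γ n, x.graph = S := by
  obtain ⟨hfin, hncard⟩ := encard_le_coe_iff_finite_ncard_le.1 hcard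
  refine ⟨⟨S, fun x y x' y' h h' => ?_, hfin, hncard⟩, rfl⟩
  rw [show x = y from hS h, show x' = y' from hS h']

/-- The topology of pointwise convergence of graphs: `𝓘_γ^n` is viewed as a subspace of the
Cantor cube `2^(γ × γ)`. -/
noncomputable instance : TopologicalSpace (SymInvSg γ n) :=
  .induced (fun x => x.graph.boolIndicator) inferInstance

theorem continuous_graph_boolIndicator :
    Continuous fun x : SymInvSg γ n => x.graph.boolIndicator :=
  continuous_induced_dom

theorem continuous_iff_isClopen {Y : Type*} [TopologicalSpace Y] {f : Y → SymInvSg γ n} :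
    Continuous f ↔ ∀ p, IsClopen {y | p ∈ (f y).graph} :=
  continuous_induced_rng.trans <| continuous_pi_iff.trans <|
    forall_congr' fun p => continuous_boolIndicator_iff_isClopen {y | p ∈ (f y).graph}

theorem isClopen_setOf_mem_graph (p : γ × γ) : IsClopen {x : SymInvSg γ n | p ∈ x.graph} :=
  continuous_iff_isClopen.1 continuous_id p

theorem nhds_eq_iInf (x : SymInvSg γ n) :
    𝓝 x = ⨅ p, 𝓟 {y | p ∈ y.graph ↔ p ∈ x.graph} := by
  refine (nhds_induced _ x).trans ?_
  simp only [nhds_pi, Filter.pi, comap_iInf, nhds_discrete, comap_pure, comap_principal]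
  refine iInf_congr fun p => congrArg 𝓟 (Set.ext fun y => ?_)
  change y.graph.boolIndicator p = x.graph.boolIndicator p ↔ (p ∈ y.graph ↔ p ∈ x.graph)
  rw [Bool.eq_iff_iff, ← mem_iff_boolIndicator, ← mem_iff_boolIndicator]

theorem mem_closure_of_forall_finite {x : SymInvSg γ n} {S : Set (SymInvSg γ n)}
    (h : ∀ T : Set (γ × γ), T.Finite → ∃ y ∈ S, ∀ p ∈ T, (p ∈ y.graph ↔ p ∈ x.graph)) :
    x ∈ closure S := by
  have hbasis := hasBasis_iInf_principal_finite
    fun p => {y : SymInvSg γ n | p ∈ y.graph ↔ p ∈ x.graph}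
  rw [← nhds_eq_iInf] at hbasis
  exact (mem_closure_iff_nhds_basis hbasis).2 fun T hT => by simpa using h T hT

instance : T2Space (SymInvSg γ n) := by
  refine .of_injective_continuous (fun x y hxy => ext' (Set.ext fun p => ?_))
    continuous_graph_boolIndicator
  rw [mem_iff_boolIndicator, mem_iff_boolIndicator, hxy]

instance : CompactSpace (SymInvSg γ n) := by
  refine ⟨isCompact_iff_ultrafilter_le_nhds.2 fun f _ => ?_⟩
  obtain ⟨x, hx⟩ : ∃ x : SymInvSg γ n,
      x.graph = {p | ∀ᶠ y in (f : Filter (SymInvSg γ n)), p ∈ y.graph} :=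
    exists_graph_eq_of_forall_finite_subset fun T hTS hT =>
      ((eventually_all_finite hT).2 hTS).exists
  refine ⟨x, mem_univ x, ?_⟩
  rw [nhds_eq_iInf, hx]
  refine le_iInf fun p => le_principal_iff.2 ?_
  by_cases hp : ∀ᶠ y in (f : Filter (SymInvSg γ n)), p ∈ y.graph
  · exact hp.mono fun y hy => iff_of_true hy hp
  · exact (Ultrafilter.eventually_not.2 hp).mono fun y hy => iff_of_false hy hp

theorem isOpen_singleton_of_rank_eq {x : SymInvSg γ n} (hx : x.rank = n) : IsOpen {x} := by
  have hsingleton : {x} = ⋂ p ∈ x.graph, {y : SymInvSg γ n | p ∈ y.graph} := by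
    ext y
    simp only [mem_iInter]
    exact ⟨fun hy p hp => hy ▸ hp, fun hxy => (eq_of_le_of_rank_eq hxy hx).symm⟩
  rw [hsingleton]
  exact x.finite'.isOpen_biInter fun p _ => (isClopen_setOf_mem_graph p).isOpen

protected theorem continuous_mul_left (a : SymInvSg γ n) :
    Continuous fun x : SymInvSg γ n => a * x := by
  refine continuous_iff_isClopen.2 fun p => ?_
  have hunion : {x : SymInvSg γ n | p ∈ (a * x).graph} =
      ⋃ q ∈ {q ∈ a.graph | q.1 = p.1}, {x | (q.2, p.2) ∈ x.graph} := by
    ext x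
    simp [mul_graph]
  rw [hunion]
  exact (a.finite'.subset (sep_subset _ _)).isClopen_biUnion fun q _ =>
    isClopen_setOf_mem_graph (q.2, p.2)

protected theorem continuous_mul_right (a : SymInvSg γ n) :
    Continuous fun x : SymInvSg γ n => x * a := by
  refine continuous_iff_isClopen.2 fun p => ?_
  have hunion : {x : SymInvSg γ n | p ∈ (x * a).graph} =
      ⋃ q ∈ {q ∈ a.graph | q.2 = p.2}, {x | (p.1, q.1) ∈ x.graph} := by
    ext x
    simp [mul_graph, and_comm]
  rw [hunion]
  exact (a.finite'.subset (sep_subset _ _)).isClopen_biUnion fun q _ =>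
    isClopen_setOf_mem_graph (p.1, q.1)

theorem shiftContinuous : ShiftContinuous (SymInvSg γ n) := fun a =>
  ⟨SymInvSg.continuous_mul_left a, SymInvSg.continuous_mul_right a⟩

/-- The idempotents of rank `k`. The idempotents of `𝓘_γ^n` are the partial identities, that is,
the partial bijections whose graph lies on the diagonal. -/
def idempotentsOfRank (k : ℕ) : Set (SymInvSg γ n) :=
  {x | x.graph ⊆ diagonal γ ∧ x.rank = k}

theorem zero_mem_idempotentsOfRank : (0 : SymInvSg γ n) ∈ idempotentsOfRank 0 :=
  ⟨empty_subset _, ncard_empty _⟩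

theorem idempotentsOfRank_subset_compl {j k : ℕ} (hjk : j ≠ k) :
    (idempotentsOfRank j : Set (SymInvSg γ n)) ⊆ (idempotentsOfRank k)ᶜ :=
  fun _ hj hk => hjk (hj.2.symm.trans hk.2)

theorem isClosed_mul_left_preimage_idempotentsOfRank (a : SymInvSg γ n) (k : ℕ) :
    IsClosed ((a * ·) ⁻¹' (idempotentsOfRank k : Set (SymInvSg γ n))) := by
  have hpre : (a * ·) ⁻¹' (idempotentsOfRank k : Set (SymInvSg γ n)) =
      (a * ·) ⁻¹' (idempotentsOfRank k ∩ restrictedTo (Prod.fst '' a.graph)) := by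
    refine Subset.antisymm (fun x hx => ⟨hx, fun p hp => ?_⟩) fun x hx => hx.1
    have hdom : p.1 ∈ Prod.fst '' a.graph := hp.elim fun y hy => ⟨(p.1, y), hy.1, rfl⟩
    exact ⟨hdom, hx.1 hp ▸ hdom⟩
  rw [hpre]
  exact ((finite_restrictedTo (a.finite'.image _)).inter_of_right _).isClosed.preimage
    a.continuous_mul_left

theorem isClosed_mul_right_preimage_idempotentsOfRank (a : SymInvSg γ n) (k : ℕ) :
    IsClosed ((· * a) ⁻¹' (idempotentsOfRank k : Set (SymInvSg γ n))) := by
  have hpre : (· * a) ⁻¹' (idempotentsOfRank k : Set (SymInvSg γ n)) =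
      (· * a) ⁻¹' (idempotentsOfRank k ∩ restrictedTo (Prod.snd '' a.graph)) := by
    refine Subset.antisymm (fun x hx => ⟨hx, fun p hp => ?_⟩) fun x hx => hx.1
    have hran : p.2 ∈ Prod.snd '' a.graph := hp.elim fun y hy => ⟨(y, p.2), hy.2, rfl⟩
    exact ⟨(hx.1 hp).symm ▸ hran, hran⟩
  rw [hpre]
  exact ((finite_restrictedTo (a.finite'.image _)).inter_of_right _).isClosed.preimage
    a.continuous_mul_right

theorem shiftContinuous_forceClosed_idempotentsOfRank (k : ℕ) :
    @ShiftContinuous (SymInvSg γ n) (forceClosed (idempotentsOfRank k)) _ :=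
  shiftContinuous.forceClosed fun a =>
    ⟨isClosed_mul_left_preimage_idempotentsOfRank a k,
      isClosed_mul_right_preimage_idempotentsOfRank a k⟩

theorem idempotentsOfRank_inter_restrictedTo_subset_closure {A : Set γ} (hA : A.Infinite)
    {j k : ℕ} (hjk : j ≤ k) (hkn : k ≤ n) :
    (idempotentsOfRank j ∩ restrictedTo A : Set (SymInvSg γ n)) ⊆
      closure (idempotentsOfRank k ∩ restrictedTo A) := by
  rintro x ⟨⟨hxdiag, hxj⟩, hxA⟩
  refine mem_closure_of_forall_finite fun T hT => ?_
  -- Extend `x` by points of the diagonal of `A` outside `T`.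
  have hdiagA : ((fun a => (a, a)) '' A).Infinite :=
    hA.image fun a _ b _ hab => congrArg Prod.fst hab
  have hxcard : x.graph.encard ≤ k := by
    rw [← x.finite'.cast_ncard_eq]
    exact_mod_cast hxj.trans_le hjk
  obtain ⟨S, hxS, hS, hScard⟩ := exists_superset_subset_encard_eq
    (subset_union_left (t := (fun a => (a, a)) '' A \ T)) hxcard
    (by simp [((hdiagA.sdiff hT).mono subset_union_right).encard_eq])
  have hSdiag : S ⊆ diagonal γ ∩ A ×ˢ A := hS.trans <| union_subset (subset_inter hxdiag hxA) <| by
    rintro _ ⟨⟨a, ha, rfl⟩, -⟩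
    exact ⟨rfl, ha, ha⟩
  obtain ⟨y, rfl⟩ := exists_graph_eq_of_subset_diagonal (n := n)
    (hSdiag.trans inter_subset_left) (hScard.trans_le (by exact_mod_cast hkn))
  refine ⟨y, ⟨⟨hSdiag.trans inter_subset_left, ?_⟩, hSdiag.trans inter_subset_right⟩, ?_⟩
  · simp [rank, ncard, hScard]
  · exact fun p hpT => ⟨fun hpy => (hS hpy).resolve_right fun hp => hp.2 hpT, fun hp => hxS hp⟩

theorem dense_compl_idempotentsOfRank [Infinite γ] {k : ℕ} (hk : k < n) :
    Dense (idempotentsOfRank k : Set (SymInvSg γ n))ᶜ := by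
  intro x
  by_cases hx : x ∈ idempotentsOfRank k
  · have hcl := idempotentsOfRank_inter_restrictedTo_subset_closure infinite_univ hk.le le_rfl
      ⟨hx, fun p _ => ⟨mem_univ p.1, mem_univ p.2⟩⟩
    exact closure_mono (inter_subset_left.trans (idempotentsOfRank_subset_compl hk.ne')) hcl
  · exact subset_closure hx

theorem not_omegaBoundedPracompact_forceClosed_idempotentsOfRank [Infinite γ] {k : ℕ}
    (hk : 0 < k) (hkn : k < n) :
    ¬ @OmegaBoundedPracompact (SymInvSg γ n) (forceClosed (idempotentsOfRank k)) := by
  rintro ⟨D, hD, hcompact⟩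
  let A : Set γ := range (Infinite.natEmbedding γ)
  have hA : A.Infinite := infinite_range_of_injective (Infinite.natEmbedding γ).injective
  let C : Set (SymInvSg γ n) := idempotentsOfRank n ∩ restrictedTo A
  have hCD : C ⊆ D := fun x hx => by
    have hopen := forceClosed_le (idempotentsOfRank k) _ (isOpen_singleton_of_rank_eq hx.1.2)
    obtain ⟨y, rfl, hy⟩ := @Dense.inter_open_nonempty _ (forceClosed _) D hD {x} hopen
      (singleton_nonempty x)
    exact hy
  have hC : C.Countable := (countable_restrictedTo (countable_range _)).mono inter_subset_right
  have hclosed := isClosed_inter_of_isCompact_forceClosed (hcompact C hCD hC)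
  rw [closure_forceClosed (inter_subset_left.trans (idempotentsOfRank_subset_compl hkn.ne'))]
    at hclosed
  have hsub : idempotentsOfRank k ∩ restrictedTo A ⊆ closure C ∩ idempotentsOfRank k :=
    subset_inter (idempotentsOfRank_inter_restrictedTo_subset_closure hA hkn.le le_rfl)
      inter_subset_left
  have hzero : (0 : SymInvSg γ n) ∈ closure (idempotentsOfRank k ∩ restrictedTo A) :=
    idempotentsOfRank_inter_restrictedTo_subset_closure hA hk.le hkn.le
      ⟨zero_mem_idempotentsOfRank, fun _ hp => hp.elim⟩
  exact idempotentsOfRank_subset_compl hk.ne zero_mem_idempotentsOfRank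
    (closure_minimal hsub hclosed hzero).2

end SymInvSg

theorem exists_countablyPracompact_not_omegaBoundedPracompact_topology_general
    {γ : Type*} [Infinite γ] {n : ℕ} (hn : 2 ≤ n) :
    ∃ τ : TopologicalSpace (SymInvSg γ n),
      @T2Space (SymInvSg γ n) τ ∧
      @ShiftContinuous (SymInvSg γ n) τ _ ∧
      @CountablyPracompact (SymInvSg γ n) τ ∧
      @FeeblyCompact (SymInvSg γ n) τ ∧
      ¬ @CompactSpace (SymInvSg γ n) τ ∧
      ¬ @OmegaBoundedPracompact (SymInvSg γ n) τ := by
  have hT2 := t2Space_forceClosed (SymInvSg.idempotentsOfRank 1 : Set (SymInvSg γ n))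
  have hcountably := countablyPracompact_forceClosed
    (SymInvSg.dense_compl_idempotentsOfRank (γ := γ) (show 1 < n from hn))
  have homega := SymInvSg.not_omegaBoundedPracompact_forceClosed_idempotentsOfRank
    (γ := γ) one_pos (show 1 < n from hn)
  exact ⟨_, hT2, SymInvSg.shiftContinuous_forceClosed_idempotentsOfRank 1, hcountably,
    @CountablyPracompact.feeblyCompact _ (forceClosed _) (@T2Space.t1Space _ (forceClosed _) hT2)
      hcountably,
    fun hcompact => homega (@OmegaBoundedPracompact.of_compactSpace _ (forceClosed _) hcompact),
    homega⟩

/-- There exists a Hausdorff shift-continuous topology on the countable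
semigroup `𝓘_ω^2` which is countably pracompact (hence feebly compact) but neither
compact nor ω-bounded-pracompact. -/
theorem exists_countablyPracompact_not_omegaBoundedPracompact_topology :
    ∃ τ : TopologicalSpace (SymInvSg ℕ 2),
      @T2Space (SymInvSg ℕ 2) τ ∧
      @ShiftContinuous (SymInvSg ℕ 2) τ _ ∧
      @CountablyPracompact (SymInvSg ℕ 2) τ ∧
      @FeeblyCompact (SymInvSg ℕ 2) τ ∧
      ¬ @CompactSpace (SymInvSg ℕ 2) τ ∧
      ¬ @OmegaBoundedPracompact (SymInvSg ℕ 2) τ  :=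
  exists_countablyPracompact_not_omegaBoundedPracompact_topology_general le_rfl
end

section
/- Let n be any positive integer and λ any infinite cardinal, and suppose 𝓘_λ^n carries a shift-continuous T₁-topology (so it is a T₁-semitopological semigroup). Then for any subset A ⊆ λ, the subsemigroup 𝓘_A^n = {α ∈ 𝓘_λ^n : dom α ⊆ A and ran α ⊆ A} is a closed subset of 𝓘_λ^n. -/
/-!
For the idempotents `e x = {(x, x)}`, the product `e x * α * e y` is `{(x, y)}` when
`(x, y) ∈ α` and zero otherwise, so the set of `α` avoiding `(x, y)` is the preimage of the closed
set `{0}` under a left translation followed by a right one. The set `𝓘_A^n` is the intersection of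
these closed sets over all pairs outside `A × A`.
-/

open Set Topology Filter

namespace SymInvSg

variable {γ : Type*} {n : ℕ}

/-- The rank-one partial bijection with graph `{(x, y)}`, a matrix unit of `𝓘_γ^n`. Multiplying
`α` by such maps on both sides isolates a single pair of its graph. -/
def single (hn : 0 < n) (x y : γ) : SymInvSg γ n where
  graph := {(x, y)}
  inj' := by
    rintro _ _ _ _ ⟨rfl, rfl⟩ ⟨rfl, rfl⟩
    exact iff_of_true rfl rfl
  finite' := finite_singleton _
  card_le' := (ncard_singleton _).trans_le hn

theorem single_mul_mul_single_eq_zero_iff (hn : 0 < n) (w x y z : γ) (α : SymInvSg γ n) :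
    single hn w x * α * single hn y z = 0 ↔ (x, y) ∉ α.graph := by
  constructor
  · intro h hxy
    have hwz : (w, z) ∈ (single hn w x * α * single hn y z).graph := ⟨y, ⟨x, rfl, hxy⟩, rfl⟩
    rw [h] at hwz
    exact hwz
  · intro hxy
    refine ext' (eq_empty_of_forall_notMem ?_)
    rintro ⟨_, _⟩ ⟨_, ⟨_, ⟨rfl, rfl⟩, hα⟩, ⟨rfl, rfl⟩⟩
    exact hxy hα

theorem restrictedTo_eq_setOf_graph_subset (A : Set γ) :
    (restrictedTo A : Set (SymInvSg γ n)) = {α | α.graph ⊆ A ×ˢ A} :=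
  rfl

variable [TopologicalSpace (SymInvSg γ n)]

theorem isClosed_setOf_notMem_graph (hn : 0 < n) (hsc : ShiftContinuous (SymInvSg γ n))
    (h0 : IsClosed ({0} : Set (SymInvSg γ n))) (p : γ × γ) :
    IsClosed {α : SymInvSg γ n | p ∉ α.graph} := by
  obtain ⟨x, y⟩ := p
  have hcont : Continuous fun α : SymInvSg γ n => single hn x x * α * single hn y y :=
    (hsc (single hn y y)).2.comp (hsc (single hn x x)).1
  simpa only [preimage, mem_singleton_iff, single_mul_mul_single_eq_zero_iff] using
    h0.preimage hcont

theorem isClosed_setOf_graph_subset (hn : 0 < n) (hsc : ShiftContinuous (SymInvSg γ n))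
    (h0 : IsClosed ({0} : Set (SymInvSg γ n))) (R : Set (γ × γ)) :
    IsClosed {α : SymInvSg γ n | α.graph ⊆ R} := by
  have hinter : {α : SymInvSg γ n | α.graph ⊆ R} = ⋂ p ∈ Rᶜ, {α | p ∉ α.graph} := by
    ext α
    simp only [subset_def, mem_ofPred_eq, mem_iInter, mem_compl_iff, not_imp_not]
  rw [hinter]
  exact isClosed_biInter fun p _ => isClosed_setOf_notMem_graph hn hsc h0 p

end SymInvSg

theorem isClosed_restrictedTo_general {γ : Type*} {n : ℕ} (hn : 0 < n)
    [TopologicalSpace (SymInvSg γ n)] (hsc : ShiftContinuous (SymInvSg γ n))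
    (h0 : IsClosed ({0} : Set (SymInvSg γ n))) (A : Set γ) :
    IsClosed (SymInvSg.restrictedTo A : Set (SymInvSg γ n)) := by
  rw [SymInvSg.restrictedTo_eq_setOf_graph_subset]
  exact SymInvSg.isClosed_setOf_graph_subset hn hsc h0 (A ×ˢ A)

/-- In a `T₁`-semitopological semigroup `𝓘_λ^n` (`n` a positive integer,
`λ` an infinite cardinal), the subsemigroup `𝓘_A^n` is closed for every `A ⊆ λ`. -/
theorem isClosed_restrictedTo {γ : Type*} [Infinite γ] {n : ℕ} (hn : 0 < n)
    [TopologicalSpace (SymInvSg γ n)] [T1Space (SymInvSg γ n)]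
    (hsc : ShiftContinuous (SymInvSg γ n)) (A : Set γ) :
    IsClosed (SymInvSg.restrictedTo A : Set (SymInvSg γ n)) :=
  isClosed_restrictedTo_general hn hsc isClosed_singleton A
end

section
/- Let n be any positive integer and λ any infinite cardinal, and suppose 𝓘_λ^n carries a shift-continuous T₁-topology (so it is a T₁-semitopological semigroup). Then the band E(𝓘_λ^n), i.e., the set of all idempotents of 𝓘_λ^n, is a closed subset of 𝓘_λ^n. -/
/-! If `α` is not idempotent, its graph has a pair `(x, y)` with `x ≠ y`. The two-sided
translation `β ↦ {(x, x)} * β * {(y, y)}` is continuous and vanishes exactly when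
`(x, y) ∉ β.graph`; since `{0}` is closed, the partial bijections sending `x` to `y` form an
open set. It contains `α`, and it contains no idempotent because graphs of idempotents lie
in the diagonal. -/

open Set Topology Filter

theorem ShiftContinuous.isOpen_setOf_mul_mul_ne {X : Type*} [TopologicalSpace X] [Mul X]
    (hsc : ShiftContinuous X) {c : X} (hc : IsClosed {c}) (a b : X) :
    IsOpen {x | a * x * b ≠ c} :=
  hc.isOpen_compl.preimage ((hsc b).2.comp (hsc a).1)

namespace SymInvSg

variable {γ : Type*} {n : ℕ} {a : SymInvSg γ n}

theorem pos_of_mem_graph {p : γ × γ} (hp : p ∈ a.graph) : 0 < n :=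
  ((Set.ncard_pos a.finite').mpr ⟨p, hp⟩).trans_le a.card_le'

theorem graph_nonempty_iff : a.graph.Nonempty ↔ a ≠ 0 := by
  rw [Set.nonempty_iff_ne_empty]
  exact not_congr ⟨fun h => ext' h, fun h => congrArg graph h⟩

theorem isIdempotentElem_iff_graph_subset_diagonal :
    IsIdempotentElem a ↔ a.graph ⊆ diagonal γ := by
  constructor
  · rintro h ⟨x, y⟩ hxy
    obtain ⟨z, hxz, hzy⟩ : (x, y) ∈ (a * a).graph := h.symm ▸ hxy
    obtain rfl : z = y := (a.inj' hxz hxy).mp rfl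
    exact (a.inj' hxz hzy).mpr rfl
  · refine fun h => ext' (Set.ext fun ⟨x, y⟩ => ⟨?_, fun hxy => ?_⟩)
    · rintro ⟨z, hxz, hzy⟩
      obtain rfl : x = z := h hxz
      exact hzy
    · obtain rfl : x = y := h hxy
      exact ⟨x, hxy, hxy⟩

/-- The rank-one idempotent `{(x, x)}`, used to detect by multiplication which pairs
belong to a graph. -/
def pointId (hn : 0 < n) (x : γ) : SymInvSg γ n where
  graph := {(x, x)}
  inj' := by
    rintro _ _ _ _ ⟨⟩ ⟨⟩
    rfl
  finite' := Set.finite_singleton _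
  card_le' := (Set.ncard_singleton _).trans_le hn

theorem graph_pointId_mul_mul_pointId (hn : 0 < n) (x y : γ) (b : SymInvSg γ n) :
    (pointId hn x * b * pointId hn y).graph = b.graph ∩ {(x, y)} := by
  ext ⟨u, v⟩
  constructor
  · rintro ⟨_, ⟨_, ⟨⟩, hxy⟩, ⟨⟩⟩
    exact ⟨hxy, rfl⟩
  · rintro ⟨hxy, ⟨⟩⟩
    exact ⟨y, ⟨x, rfl, hxy⟩, rfl⟩

theorem pointId_mul_mul_pointId_ne_zero_iff (hn : 0 < n) (x y : γ) (b : SymInvSg γ n) :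
    pointId hn x * b * pointId hn y ≠ 0 ↔ (x, y) ∈ b.graph := by
  rw [← graph_nonempty_iff, graph_pointId_mul_mul_pointId, Set.inter_singleton_nonempty]

theorem isOpen_setOf_mem_graph [TopologicalSpace (SymInvSg γ n)]
    (hsc : ShiftContinuous (SymInvSg γ n)) (h0 : IsClosed ({0} : Set (SymInvSg γ n)))
    (p : γ × γ) : IsOpen {b : SymInvSg γ n | p ∈ b.graph} := by
  obtain rfl | hn := n.eq_zero_or_pos
  · have hempty : {b : SymInvSg γ 0 | p ∈ b.graph} = ∅ :=
      Set.eq_empty_of_forall_notMem fun _ hb => (pos_of_mem_graph hb).false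
    exact hempty ▸ isOpen_empty
  · simpa only [pointId_mul_mul_pointId_ne_zero_iff] using
      hsc.isOpen_setOf_mul_mul_ne h0 (pointId hn p.1) (pointId hn p.2)

end SymInvSg

open SymInvSg in
theorem isClosed_idempotents_general {γ : Type*} {n : ℕ} [TopologicalSpace (SymInvSg γ n)]
    (hsc : ShiftContinuous (SymInvSg γ n)) (h0 : IsClosed ({0} : Set (SymInvSg γ n))) :
    IsClosed {α : SymInvSg γ n | α * α = α} := by
  have hdiag : {α : SymInvSg γ n | α * α = α} =
      ⋂ p ∈ (diagonal γ)ᶜ, {α : SymInvSg γ n | p ∈ α.graph}ᶜ := by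
    ext α
    simp only [mem_iInter₂, mem_compl_iff, mem_ofPred_eq, not_imp_not]
    exact isIdempotentElem_iff_graph_subset_diagonal
  rw [hdiag]
  exact isClosed_biInter fun p _ => (isOpen_setOf_mem_graph hsc h0 p).isClosed_compl

/-- In a `T₁`-semitopological semigroup `𝓘_λ^n` (`n` a positive integer,
`λ` an infinite cardinal), the band `E(𝓘_λ^n)` of idempotents is closed. -/
theorem isClosed_idempotents {γ : Type*} [Infinite γ] {n : ℕ} (hn : 0 < n)
    [TopologicalSpace (SymInvSg γ n)] [T1Space (SymInvSg γ n)]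
    (hsc : ShiftContinuous (SymInvSg γ n)) :
    IsClosed {α : SymInvSg γ n | α * α = α} :=
  isClosed_idempotents_general hsc isClosed_singleton
end
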